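/- Let p ≥ 3 be a prime, δ ∈ (0,1] and ε > 0. There exists a constant c > 0 depending only on p, δ and ε such that: for every real-split central division ℚ-algebra A of degree p, every order 𝒪 ⊆ A with discriminant D = disc(𝒪), every z ∈ GL_p(ℝ), and every real L ≥ 1 with L ≤ c·D^{1/(4p(p-1)) − ε}, the ℚ-linear span of ⋃_{1≤m≤L^{2p-2}} 𝒪(m; z, δ) is a proper ℚ-subspace of A (i.e. not equal to A). -/

import Mathlib

open Matrix

/-- `IsSO k` : `k ∈ SO(n)`. -/
def IsSO {n : ℕ} (k : Matrix (Fin n) (Fin n) ℝ) : Prop :=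
  kᵀ * k = 1 ∧ k.det = 1

/-- An order in a `ℚ`-algebra: a subring which is finitely generated as a `ℤ`-module and
contains a `ℚ`-basis of the algebra. -/
def IsOrder (A : Type*) [Ring A] [Algebra ℚ A] (O : Subring A) : Prop :=
  O.toAddSubgroup.FG ∧ Submodule.span ℚ (O : Set A) = ⊤

/-- The set `𝒪(m; z, δ)`. -/
noncomputable def OSet {n : ℕ} {A : Type*} [DivisionRing A] [CharZero A]
    (ι : A →ₐ[ℚ] Matrix (Fin n) (Fin n) ℝ) (O : Subring A)
    (z : Matrix.GeneralLinearGroup (Fin n) ℝ) (m : ℕ) (δ : ℝ) : Set A :=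
  {γ | γ ∈ O ∧ (ι γ).det = (m : ℝ) ∧
    ∃ k : Matrix (Fin n) (Fin n) ℝ, IsSO k ∧
      ∀ i j, |(((m : ℝ) ^ (-(1 : ℝ) / (n : ℝ))) •
        ((↑z⁻¹ : Matrix (Fin n) (Fin n) ℝ) * ι γ * (↑z : Matrix (Fin n) (Fin n) ℝ)) - k) i j| < δ}

/-- `D` is the discriminant of the order `𝒪`: the nonnegative generator of the ideal of `ℤ`
generated by the integers `det (tr (xᵢ xⱼ))` over all `x₁, …, x_{n²} ∈ 𝒪`. -/
def IsDisc {n : ℕ} {A : Type*} [DivisionRing A] [CharZero A]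
    (ι : A →ₐ[ℚ] Matrix (Fin n) (Fin n) ℝ) (O : Subring A) (D : ℕ) : Prop :=
  Ideal.span {d : ℤ | ∃ x : Fin (n ^ 2) → A, (∀ i, x i ∈ O) ∧
      (d : ℝ) = (Matrix.of fun i j => (ι (x i * x j)).trace).det} = Ideal.span {(D : ℤ)}

/-!
If the elements of `𝒪` in question span `A`, choose a basis `e` of `A` among them. Since `ι`
identifies `ℝ ⊗ A` with the full matrix algebra, the trace form is nondegenerate and reduced traces
are rational; on `𝒪` they are moreover integral. So `det (tr (eᵢ eⱼ))` is a nonzero integer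
divisible by `D`, hence at least `D` in absolute value. On the other hand, the conjugate by `z` of
each `eᵢ` has entries `O(X ^ (1 / n))` with `X = L ^ (2 * n - 2)`, so each `tr (eᵢ eⱼ)` is
`O(X ^ (2 / n))` and the determinant of size `n ^ 2` is `O(X ^ (2 * n))`. Therefore
`D = O(L ^ (4 * n * (n - 1)))`.
-/

open scoped TensorProduct

section LinearDisjointness

variable {K D B : Type*} [Field K]
  [DivisionRing D] [Algebra K D] [Algebra.IsCentral K D]
  [Ring B] [Algebra K B]

theorem eq_zero_of_sum_mul_map_eq_zero_of_commute (ι : D →ₐ[K] B) {I : Type*} {r : I → B}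
    (hr : LinearIndependent K r) (hcomm : ∀ i x, Commute (r i) (ι x)) (s : Finset I) :
    ∀ a : I → D, ∑ i ∈ s, r i * ι (a i) = 0 → ∀ i ∈ s, a i = 0 := by
  classical
  induction s using Finset.induction_on with
  | empty => simp
  | insert j s hj ih =>
    intro a ha
    suffices haj : a j = 0 by
      rw [Finset.sum_insert hj, haj, map_zero, mul_zero, zero_add] at ha
      exact (Finset.forall_mem_insert ..).2 ⟨haj, ih a ha⟩
    by_contra haj
    let a' : I → D := fun i ↦ a i * (a j)⁻¹
    have ha'j : a' j = 1 := mul_inv_cancel₀ haj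
    have hsum : ∑ i ∈ insert j s, r i * ι (a' i) = 0 := by
      simp only [a', map_mul, ← mul_assoc, ← Finset.sum_mul, ha, zero_mul]
    -- Commuting the relation with `b` kills its `j`-th term, since `a' j = 1`.
    have hcentral : ∀ i ∈ s, a' i ∈ Subalgebra.center K D := by
      refine fun i hi ↦ Subalgebra.mem_center_iff.2 fun b ↦ sub_eq_zero.1 ?_
      refine ih (fun i ↦ b * a' i - a' i * b) ?_ i hi
      calc ∑ i ∈ s, r i * ι (b * a' i - a' i * b)
          = ∑ i ∈ insert j s, r i * ι (b * a' i - a' i * b) := by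
            simp [Finset.sum_insert hj, ha'j]
        _ = ι b * ∑ i ∈ insert j s, r i * ι (a' i)
              - (∑ i ∈ insert j s, r i * ι (a' i)) * ι b := by
            simp only [Finset.mul_sum, Finset.sum_mul, ← Finset.sum_sub_distrib, map_sub, map_mul,
              mul_sub, ← mul_assoc, (hcomm _ b).eq]
        _ = 0 := by rw [hsum, mul_zero, zero_mul, sub_zero]
    have hscalar : ∀ i ∈ insert j s, ∃ q : K, algebraMap K D q = a' i := by
      refine (Finset.forall_mem_insert ..).2 ⟨⟨1, by rw [map_one, ha'j]⟩, fun i hi ↦ ?_⟩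
      exact Algebra.mem_bot.1 (Algebra.IsCentral.out (hcentral i hi))
    choose! q hq using hscalar
    have hqj : q j = 0 := by
      refine linearIndependent_iff'.1 hr _ q ?_ j (Finset.mem_insert_self j s)
      rw [← hsum]
      refine Finset.sum_congr rfl fun i hi ↦ ?_
      rw [← hq i hi, AlgHom.commutes, ← Algebra.commutes, Algebra.smul_def]
    exact one_ne_zero (ha'j.symm.trans (by rw [← hq j (Finset.mem_insert_self j s), hqj, map_zero]))

end LinearDisjointness

section BaseChange

variable {K F A B : Type*} [CommRing K] [CommRing F] [Algebra K F] [Ring A] [Algebra K A]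
  [Ring B] [Algebra K B] [Algebra F B] [IsScalarTower K F B]

/-- The `F`-algebra homomorphism `c ⊗ x ↦ c • ι x` induced by a `K`-algebra homomorphism `ι` into
an `F`-algebra. -/
noncomputable def baseChangeLift (ι : A →ₐ[K] B) : F ⊗[K] A →ₐ[F] B :=
  Algebra.TensorProduct.lift (Algebra.ofId F B) ι fun c x ↦ Algebra.commutes c (ι x)

theorem baseChangeLift_tmul (ι : A →ₐ[K] B) (c : F) (x : A) :
    baseChangeLift ι (c ⊗ₜ[K] x) = algebraMap F B c * ι x :=
  Algebra.TensorProduct.lift_tmul ..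

end BaseChange

section MatrixTrace

variable {n F : Type*} [Fintype n] [Field F]

theorem trace_mulLeft_matrix (M : Matrix n n F) :
    LinearMap.trace F (Matrix n n F) (LinearMap.mulLeft F M) = Fintype.card n * M.trace := by
  classical
  have hrepr (N : Matrix n n F) (i j : n) : (Matrix.stdBasis F n n).repr N (i, j) = N i j := by
    simp [Matrix.stdBasis]
  rw [LinearMap.trace_eq_matrix_trace F (Matrix.stdBasis F n n), Matrix.trace]
  simp only [Matrix.diag_apply, LinearMap.toMatrix_apply, LinearMap.mulLeft_apply,
    Fintype.sum_prod_type, hrepr, Matrix.stdBasis_eq_single, Matrix.mul_single_apply_same, mul_one]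
  simp [Matrix.trace, Finset.mul_sum]

theorem det_trace_mul_ne_zero {J : Type*} [Fintype J] [DecidableEq J]
    (b : Module.Basis J F (Matrix n n F)) :
    (Matrix.of fun i j ↦ (b i * b j).trace).det ≠ 0 := by
  let T : LinearMap.BilinForm F (Matrix n n F) :=
    (LinearMap.mul F (Matrix n n F)).compr₂ (Matrix.traceLinearMap n F F)
  have hT : T.Nondegenerate := .ofSeparatingLeft fun M hM ↦
    Matrix.ext_iff_trace_mul_right.2 fun N ↦ by simpa [T] using hM N
  have hmatrix : LinearMap.BilinForm.toMatrix b T = Matrix.of fun i j ↦ (b i * b j).trace := by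
    ext i j
    simp [T, LinearMap.BilinForm.toMatrix_apply]
  exact hmatrix ▸ (LinearMap.BilinForm.nondegenerate_iff_det_ne_zero b).1 hT

end MatrixTrace

section Splitting

variable {K F D : Type*} [Field K] [Field F] [Algebra K F]
  [DivisionRing D] [Algebra K D] [Algebra.IsCentral K D]

theorem baseChangeLift_injective {B : Type*} [Ring B] [Nontrivial B] [Algebra K B]
    [Algebra F B] [IsScalarTower K F B] (ι : D →ₐ[K] B) :
    Function.Injective (baseChangeLift (F := F) ι) := by
  rw [injective_iff_map_eq_zero]
  intro t ht
  let r := Module.Basis.ofVectorSpace K F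
  obtain ⟨a, rfl⟩ := TensorProduct.eq_repr_basis_left r t
  have hr : LinearIndependent K (fun i ↦ algebraMap F B (r i)) :=
    r.linearIndependent.map' (IsScalarTower.toAlgHom K F B).toLinearMap
      (LinearMap.ker_eq_bot.2 (algebraMap F B).injective)
  have ha : ∑ i ∈ a.support, algebraMap F B (r i) * ι (a i) = 0 := by
    simpa only [Finsupp.sum, map_sum, baseChangeLift_tmul] using ht
  have hzero := eq_zero_of_sum_mul_map_eq_zero_of_commute ι hr
    (fun i x ↦ Algebra.commutes (r i) (ι x)) _ a ha
  exact Finset.sum_eq_zero fun i hi ↦ by simp [hzero i hi]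

variable {n : Type*} [Fintype n] [DecidableEq n] [Nonempty n]

theorem baseChangeLift_bijective (ι : D →ₐ[K] Matrix n n F)
    (hD : Module.finrank K D = Fintype.card n ^ 2) :
    Function.Bijective (baseChangeLift (F := F) ι) := by
  have : Module.Finite K D :=
    Module.finite_of_finrank_pos (hD ▸ pow_pos Fintype.card_pos 2)
  have hfinrank : Module.finrank F (F ⊗[K] D) = Module.finrank F (Matrix n n F) := by
    rw [Module.finrank_baseChange, hD, Module.finrank_matrix, Module.finrank_self, mul_one, sq]
  have hinj := baseChangeLift_injective (F := F) ι
  exact ⟨hinj, (LinearMap.injective_iff_surjective_of_finrank_eq_finrank hfinrank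
    (f := (baseChangeLift ι).toLinearMap)).1 hinj⟩

/-- A representation of a central division algebra of degree `n` by `n × n` matrices over an
extension field `F` splits it: the base change to `F` is the full matrix algebra. -/
noncomputable def splittingEquiv (ι : D →ₐ[K] Matrix n n F)
    (hD : Module.finrank K D = Fintype.card n ^ 2) : F ⊗[K] D ≃ₐ[F] Matrix n n F :=
  AlgEquiv.ofBijective (baseChangeLift ι) (baseChangeLift_bijective ι hD)

theorem splittingEquiv_tmul (ι : D →ₐ[K] Matrix n n F)
    (hD : Module.finrank K D = Fintype.card n ^ 2) (c : F) (x : D) :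
    splittingEquiv ι hD (c ⊗ₜ[K] x) = c • ι x := by
  rw [splittingEquiv, AlgEquiv.ofBijective_apply, baseChangeLift_tmul, ← Algebra.smul_def]

theorem card_mul_trace_map_eq_algebraMap_trace (ι : D →ₐ[K] Matrix n n F)
    (hD : Module.finrank K D = Fintype.card n ^ 2) (x : D) :
    Fintype.card n * (ι x).trace =
      algebraMap K F (LinearMap.trace K D (LinearMap.mulLeft K x)) := by
  have : Module.Finite K D :=
    Module.finite_of_finrank_pos (hD ▸ pow_pos Fintype.card_pos 2)
  let Φ := splittingEquiv ι hD
  have hconj : Φ.toLinearEquiv.conj ((LinearMap.mulLeft K x).baseChange F)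
      = LinearMap.mulLeft F (ι x) := by
    refine LinearMap.ext fun M ↦ ?_
    obtain ⟨t, rfl⟩ := Φ.toLinearEquiv.surjective M
    rw [LinearEquiv.conj_apply_apply, LinearEquiv.symm_apply_apply]
    induction t with
    | zero => simp only [map_zero]
    | tmul c y => simp [Φ, splittingEquiv_tmul]
    | add s t hs ht => simp only [map_add, hs, ht]
  rw [← trace_mulLeft_matrix, ← hconj, LinearMap.trace_conj', LinearMap.trace_baseChange]

theorem det_trace_map_mul_ne_zero (ι : D →ₐ[K] Matrix n n F)
    (hD : Module.finrank K D = Fintype.card n ^ 2) {J : Type*} [Fintype J] [DecidableEq J]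
    (e : Module.Basis J K D) :
    (Matrix.of fun i j ↦ (ι (e i * e j)).trace).det ≠ 0 := by
  let b := (Algebra.TensorProduct.basis F e).map (splittingEquiv ι hD).toLinearEquiv
  have hb : ∀ j, b j = ι (e j) := fun j ↦ by simp [b, splittingEquiv_tmul]
  simpa only [hb, ← map_mul] using det_trace_mul_ne_zero b

end Splitting

section Integrality

theorem isIntegral_of_mem_spectrum {R K B : Type*} [CommRing R] [Field K] [Algebra R K]
    [Ring B] [Algebra R B] [Algebra K B] [IsScalarTower R K B] {x : B} (hx : IsIntegral R x)
    {r : K} (hr : r ∈ spectrum K x) : IsIntegral R r := by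
  obtain ⟨f, hf, hfx⟩ := hx
  have : Nontrivial B := by
    by_contra h
    rw [not_nontrivial_iff_subsingleton] at h
    simp [spectrum.of_subsingleton] at hr
  have hfr : (f.map (algebraMap R K)).eval r ∈ spectrum K (0 : B) := by
    have := spectrum.subset_polynomial_aeval x (f.map (algebraMap R K)) ⟨r, hr, rfl⟩
    rwa [Polynomial.aeval_map_algebraMap, Polynomial.aeval_def, hfx] at this
  exact ⟨f, hf, by simpa [spectrum.zero_eq, Polynomial.eval_map] using hfr⟩

theorem isIntegral_matrix_trace {R F n : Type*} [CommRing R] [Field F] [Algebra R F]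
    [Fintype n] [DecidableEq n] {M : Matrix n n F} (hM : IsIntegral R M) :
    IsIntegral R M.trace := by
  let Ω := AlgebraicClosure F
  have hMΩ : IsIntegral R (M.map (algebraMap F Ω)) :=
    hM.map (IsScalarTower.toAlgHom R F Ω).mapMatrix
  have htrace : IsIntegral R (M.map (algebraMap F Ω)).trace := by
    rw [Matrix.trace_eq_sum_roots_charpoly]
    refine IsIntegral.multiset_sum fun r hr ↦ isIntegral_of_mem_spectrum hMΩ ?_
    exact Matrix.mem_spectrum_of_isRoot_charpoly (Polynomial.isRoot_of_mem_roots hr)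
  rw [← AddMonoidHom.map_trace] at htrace
  exact (isIntegral_algebraMap_iff (algebraMap F Ω).injective).1 htrace

theorem isIntegral_of_mem_of_fg_subring {A : Type*} [Ring A] {O : Subring A}
    (hO : O.toAddSubgroup.FG) {x : A} (hx : x ∈ O) : IsIntegral ℤ x :=
  IsIntegral.of_mem_of_fg (subalgebraOfSubring O)
    ((Submodule.fg_iff_addSubgroup_fg _).2 hO) x hx

theorem exists_int_trace_map_eq {A n : Type*} [DivisionRing A] [Algebra ℚ A]
    [Algebra.IsCentral ℚ A] [Fintype n] [DecidableEq n] [Nonempty n] (ι : A →ₐ[ℚ] Matrix n n ℝ)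
    (hA : Module.finrank ℚ A = Fintype.card n ^ 2) {x : A} (hx : IsIntegral ℤ x) :
    ∃ k : ℤ, (ι x).trace = k := by
  have hint : IsIntegral ℤ (ι x).trace :=
    isIntegral_matrix_trace (hx.map (ι : A →+* Matrix n n ℝ).toIntAlgHom)
  refine hint.exists_int_iff_exists_rat.1
    ⟨LinearMap.trace ℚ A (LinearMap.mulLeft ℚ x) / Fintype.card n, ?_⟩
  have hcard : (Fintype.card n : ℝ) ≠ 0 := by simp
  push_cast
  rw [eq_div_iff hcard, mul_comm]
  exact card_mul_trace_map_eq_algebraMap_trace ι hA x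

end Integrality

section Discriminant

variable {n : ℕ} {A : Type*} [DivisionRing A] [CharZero A]
  {ι : A →ₐ[ℚ] Matrix (Fin n) (Fin n) ℝ} {O : Subring A} {D : ℕ}

theorem exists_int_det_trace_map_mul_eq [NeZero n] [Algebra.IsCentral ℚ A]
    (hA : Module.finrank ℚ A = n ^ 2) (hO : O.toAddSubgroup.FG)
    {J : Type*} [Fintype J] [DecidableEq J] {x : J → A} (hx : ∀ i, x i ∈ O) :
    ∃ d : ℤ, (d : ℝ) = (Matrix.of fun i j ↦ (ι (x i * x j)).trace).det := by
  have hentry (i j) : ∃ k : ℤ, (ι (x i * x j)).trace = k :=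
    exists_int_trace_map_eq ι (by rwa [Fintype.card_fin])
      (isIntegral_of_mem_of_fg_subring hO (O.mul_mem (hx i) (hx j)))
  choose g hg using hentry
  refine ⟨(Matrix.of g).det, ?_⟩
  rw [Int.cast_det]
  congr 1
  ext i j
  exact (hg i j).symm

theorem IsDisc.dvd (hD : IsDisc ι O D) {x : Fin (n ^ 2) → A} (hx : ∀ i, x i ∈ O) {d : ℤ}
    (hd : (d : ℝ) = (Matrix.of fun i j ↦ (ι (x i * x j)).trace).det) : (D : ℤ) ∣ d := by
  rw [← Ideal.mem_span_singleton, ← hD]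
  exact Ideal.subset_span ⟨x, hx, hd⟩

theorem IsDisc.pos_and_le_abs_det_of_basis [NeZero n] [Algebra.IsCentral ℚ A]
    (hA : Module.finrank ℚ A = n ^ 2) (hO : O.toAddSubgroup.FG) (hD : IsDisc ι O D)
    (e : Module.Basis (Fin (n ^ 2)) ℚ A) (he : ∀ i, e i ∈ O) :
    0 < D ∧ (D : ℝ) ≤ |(Matrix.of fun i j ↦ (ι (e i * e j)).trace).det| := by
  obtain ⟨d, hd⟩ := exists_int_det_trace_map_mul_eq (ι := ι) hA hO he
  have hd0 : d ≠ 0 := by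
    have hdet := det_trace_map_mul_ne_zero ι (by rwa [Fintype.card_fin]) e
    rw [← hd] at hdet
    exact_mod_cast hdet
  have hdvd : (D : ℤ) ∣ d := hD.dvd he hd
  constructor
  · exact Nat.pos_of_ne_zero fun h ↦ hd0 (by simpa [h] using hdvd)
  · rw [← hd]
    exact_mod_cast Int.le_of_dvd (abs_pos.2 hd0) ((dvd_abs _ _).2 hdvd)

end Discriminant

section ArchimedeanBounds

theorem IsSO.abs_apply_le_one {n : ℕ} {k : Matrix (Fin n) (Fin n) ℝ} (hk : IsSO k)
    (i j : Fin n) : |k i j| ≤ 1 := by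
  refine entry_norm_bound_of_unitary ((Matrix.mem_unitaryGroup_iff' (A := k)).2 ?_) i j
  rw [Matrix.star_eq_conjTranspose, Matrix.conjTranspose_eq_transpose_of_trivial, hk.1]

theorem abs_trace_mul_le {m n : Type*} [Fintype m] [Fintype n] {M : Matrix m n ℝ}
    {N : Matrix n m ℝ} {a b : ℝ} (hM : ∀ i j, |M i j| ≤ a) (hN : ∀ i j, |N i j| ≤ b) :
    |(M * N).trace| ≤ Fintype.card m * Fintype.card n * (a * b) := by
  calc |(M * N).trace| = |∑ i, ∑ j, M i j * N j i| := by
        simp only [Matrix.trace, Matrix.diag_apply, Matrix.mul_apply]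
    _ ≤ ∑ i, ∑ j, |M i j * N j i| :=
        (Finset.abs_sum_le_sum_abs _ _).trans
          (Finset.sum_le_sum fun i _ ↦ Finset.abs_sum_le_sum_abs _ _)
    _ ≤ ∑ _i : m, ∑ _j : n, a * b := by
        gcongr with i _ j _
        rw [abs_mul]
        exact mul_le_mul (hM i j) (hN j i) (abs_nonneg _) ((abs_nonneg _).trans (hM i j))
    _ = Fintype.card m * Fintype.card n * (a * b) := by simp [mul_assoc]

theorem abs_trace_mul_le_of_conj {n : Type*} [Fintype n] [DecidableEq n]
    (z : Matrix.GeneralLinearGroup n ℝ) {M N : Matrix n n ℝ} {a b : ℝ}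
    (hM : ∀ i j, |(z⁻¹.val * M * z.val) i j| ≤ a)
    (hN : ∀ i j, |(z⁻¹.val * N * z.val) i j| ≤ b) :
    |(M * N).trace| ≤ Fintype.card n * Fintype.card n * (a * b) := by
  have hconj : z⁻¹.val * (M * N) * z.val
      = (z⁻¹.val * M * z.val) * (z⁻¹.val * N * z.val) := by
    simp only [mul_assoc, Units.mul_inv_cancel_left]
  rw [← Matrix.trace_units_conj' z (M * N), hconj]
  exact abs_trace_mul_le hM hN

variable {n : ℕ} {A : Type*} [DivisionRing A] [CharZero A]
  {ι : A →ₐ[ℚ] Matrix (Fin n) (Fin n) ℝ} {O : Subring A}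
  {z : Matrix.GeneralLinearGroup (Fin n) ℝ} {δ : ℝ}

theorem abs_conj_apply_le_of_mem_OSet {m : ℕ} (hm : 0 < m) {X : ℝ} (hmX : m ≤ X) {γ : A}
    (hγ : γ ∈ OSet ι O z m δ) (i j : Fin n) :
    |(z⁻¹.val * ι γ * z.val) i j| ≤ (1 + δ) * X ^ (1 / n : ℝ) := by
  obtain ⟨-, -, k, hk, hclose⟩ := hγ
  set M := z⁻¹.val * ι γ * z.val
  have hm0 : (0 : ℝ) < m := Nat.cast_pos.2 hm
  have hnormalized : |(m : ℝ) ^ (-1 / n : ℝ) * M i j| ≤ 1 + δ := by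
    have h : |(m : ℝ) ^ (-1 / n : ℝ) * M i j - k i j| < δ := hclose i j
    linarith [abs_sub_abs_le_abs_sub ((m : ℝ) ^ (-1 / n : ℝ) * M i j) (k i j),
      hk.abs_apply_le_one i j]
  have hδ : 0 ≤ 1 + δ := (abs_nonneg _).trans hnormalized
  rw [neg_div, Real.rpow_neg hm0.le, abs_mul, abs_inv, abs_of_pos (by positivity),
    inv_mul_le_iff₀ (by positivity), mul_comm] at hnormalized
  exact hnormalized.trans (by gcongr)

theorem abs_det_trace_map_mul_le {J : Type*} [Fintype J] [DecidableEq J] {m : J → ℕ} {X : ℝ}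
    (hm : ∀ i, 0 < m i) (hmX : ∀ i, m i ≤ X) {x : J → A}
    (hx : ∀ i, x i ∈ OSet ι O z (m i) δ) :
    |(Matrix.of fun i j ↦ (ι (x i * x j)).trace).det| ≤
      (Fintype.card J).factorial * (n * (1 + δ) * X ^ (1 / n : ℝ)) ^ (2 * Fintype.card J) := by
  rw [pow_mul, ← nsmul_eq_mul]
  refine Matrix.det_le (abv := AbsoluteValue.abs) fun i j ↦ ?_
  calc |(ι (x i * x j)).trace|
      ≤ n * n * (((1 + δ) * X ^ (1 / n : ℝ)) * ((1 + δ) * X ^ (1 / n : ℝ))) := by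
        simpa only [Fintype.card_fin, map_mul] using abs_trace_mul_le_of_conj z
          (abs_conj_apply_le_of_mem_OSet (hm i) (hmX i) (hx i))
          (abs_conj_apply_le_of_mem_OSet (hm j) (hmX j) (hx j))
    _ = (n * (1 + δ) * X ^ (1 / n : ℝ)) ^ 2 := by ring

end ArchimedeanBounds

section SpanningSets

theorem exists_basis_fin_mem_of_span_eq_top {K V : Type*} [DivisionRing K] [AddCommGroup V]
    [Module K V] [FiniteDimensional K V] {s : Set V} (hs : Submodule.span K s = ⊤) {d : ℕ}
    (hd : Module.finrank K V = d) : ∃ e : Module.Basis (Fin d) K V, ∀ i, e i ∈ s := by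
  obtain ⟨f, hfs, hspan, hli⟩ := Submodule.exists_fun_fin_finrank_span_eq K s
  let e := Module.Basis.mk hli (hspan.trans hs).ge
  have hcard : Module.finrank K (Submodule.span K s) = d := by rw [hs, finrank_top, hd]
  exact ⟨e.reindex (finCongr hcard), fun i ↦ by simpa [e] using hfs _⟩

theorem IsDisc.pos_and_le_of_span_eq_top {n : ℕ} [NeZero n] {A : Type*} [DivisionRing A]
    [CharZero A] [Algebra.IsCentral ℚ A] {ι : A →ₐ[ℚ] Matrix (Fin n) (Fin n) ℝ}
    (hA : Module.finrank ℚ A = n ^ 2) {O : Subring A} (hO : O.toAddSubgroup.FG) {D : ℕ}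
    (hD : IsDisc ι O D) {z : Matrix.GeneralLinearGroup (Fin n) ℝ} {δ X : ℝ} (hX : 0 ≤ X)
    (hspan : Submodule.span ℚ (⋃ m ∈ {m : ℕ | 1 ≤ m ∧ (m : ℝ) ≤ X}, OSet ι O z m δ) = ⊤) :
    0 < D ∧ (D : ℝ) ≤ (n ^ 2).factorial * (n * (1 + δ)) ^ (2 * n ^ 2) * X ^ (2 * n) := by
  have : FiniteDimensional ℚ A :=
    Module.finite_of_finrank_pos (hA ▸ pow_pos (NeZero.pos n) 2)
  obtain ⟨e, he⟩ := exists_basis_fin_mem_of_span_eq_top hspan hA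
  have hmem (i) : ∃ m : ℕ, (1 ≤ m ∧ (m : ℝ) ≤ X) ∧ e i ∈ OSet ι O z m δ := by
    simpa only [Set.mem_iUnion₂, Set.mem_ofPred_eq, exists_prop] using he i
  choose m hm hem using hmem
  have hroot : (X ^ (1 / n : ℝ)) ^ (2 * n ^ 2) = X ^ (2 * n) := by
    rw [show 2 * n ^ 2 = n * (2 * n) by ring, pow_mul, one_div,
      Real.rpow_inv_natCast_pow hX (NeZero.ne n)]
  obtain ⟨hpos, hle⟩ := hD.pos_and_le_abs_det_of_basis hA hO e fun i ↦ (hem i).1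
  refine ⟨hpos, hle.trans ?_⟩
  have hdet := abs_det_trace_map_mul_le (fun i ↦ (hm i).1) (fun i ↦ (hm i).2) hem
  rwa [Fintype.card_fin, mul_pow, hroot, ← mul_assoc] at hdet

end SpanningSets

theorem mul_pow_lt_of_le_inv_mul_rpow {C D L ε : ℝ} {N : ℕ} (hN : N ≠ 0) (hC : 0 ≤ C)
    (hD : 1 ≤ D) (hε : 0 ≤ ε) (hL0 : 0 ≤ L) (hL : L ≤ (C + 1)⁻¹ * D ^ (1 / N - ε : ℝ)) :
    C * L ^ N < D := by
  have hle : L ≤ (C + 1)⁻¹ * D ^ (N⁻¹ : ℝ) := by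
    refine hL.trans ?_
    rw [one_div]
    gcongr
    linarith
  calc C * L ^ N ≤ C * ((C + 1)⁻¹ * D ^ (N⁻¹ : ℝ)) ^ N := by gcongr
    _ = C * (C + 1)⁻¹ ^ N * D := by
        rw [mul_pow, Real.rpow_inv_natCast_pow (by linarith) hN, mul_assoc]
    _ ≤ C * (C + 1)⁻¹ * D := by
        gcongr
        exact pow_le_of_le_one (by positivity) (inv_le_one_of_one_le₀ (by linarith)) hN
    _ < D := by
        rw [← div_eq_mul_inv]
        exact mul_lt_of_lt_one_left (by linarith) ((div_lt_one (by linarith)).2 (by linarith))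

theorem stmt9_general.{u} (n : ℕ) (hn : 2 ≤ n) (δ : ℝ) :
    ∃ c : ℝ, 0 < c ∧
      ∀ (A : Type u) [DivisionRing A] [CharZero A]
        (ι : A →ₐ[ℚ] Matrix (Fin n) (Fin n) ℝ),
        Subalgebra.center ℚ A = ⊥ →
        Module.finrank ℚ A = n ^ 2 →
        ∀ O : Subring A, IsOrder A O →
        ∀ D : ℕ, IsDisc ι O D →
        ∀ z : Matrix.GeneralLinearGroup (Fin n) ℝ,
        ∀ L ε : ℝ, 0 ≤ L → 0 ≤ ε → L ≤ c * (D : ℝ) ^ ((1 : ℝ) / (4 * n * (n - 1)) - ε) →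
        Submodule.span ℚ
            (⋃ m ∈ {m : ℕ | 1 ≤ m ∧ (m : ℝ) ≤ L ^ (2 * n - 2)}, OSet ι O z m δ) ≠ ⊤ := by
  obtain ⟨k, rfl⟩ : ∃ k, n = k + 1 := ⟨n - 1, by lia⟩
  let C : ℝ := ((k + 1) ^ 2).factorial * ((k + 1 : ℕ) * (1 + δ)) ^ (2 * (k + 1) ^ 2)
  have hC : 0 ≤ C := mul_nonneg (Nat.cast_nonneg _) ((even_two_mul _).pow_nonneg _)
  refine ⟨(C + 1)⁻¹, by positivity, ?_⟩
  intro A _ _ ι hcenter hA O hO D hD z L ε hL0 hε hL hspan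
  have : Algebra.IsCentral ℚ A := ⟨hcenter.le⟩
  obtain ⟨hDpos, hDle⟩ := hD.pos_and_le_of_span_eq_top hA hO.1 (by positivity) hspan
  have hN : 4 * (k + 1) * k ≠ 0 := mul_ne_zero (by lia) (by lia)
  have hlt : C * L ^ (4 * (k + 1) * k) < D :=
    mul_pow_lt_of_le_inv_mul_rpow hN hC (mod_cast hDpos) hε hL0 (by simpa using hL)
  have hexp : (2 * (k + 1) - 2) * (2 * (k + 1)) = 4 * (k + 1) * k := by
    rw [show 2 * (k + 1) - 2 = 2 * k by lia]
    ring
  rw [← pow_mul, hexp] at hDle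
  exact hlt.not_ge hDle

/-- For a prime `p ≥ 3`, `δ ∈ (0,1]` and `ε > 0` there is `c > 0`,
depending only on `p, δ, ε`, such that whenever `1 ≤ L ≤ c · D^(1/(4p(p-1)) - ε)`, the
`ℚ`-linear span of `⋃_{1 ≤ m ≤ L^(2p-2)} 𝒪(m; z, δ)` is a proper subspace of `A`. -/
theorem stmt9 (p : ℕ) (hp : p.Prime) (hp3 : 3 ≤ p) (δ ε : ℝ)
    (hδ0 : 0 < δ) (hδ1 : δ ≤ 1) (hε : 0 < ε) :
    ∃ c : ℝ, 0 < c ∧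
      ∀ (A : Type) [DivisionRing A] [CharZero A]
        (ι : A →ₐ[ℚ] Matrix (Fin p) (Fin p) ℝ),
        Function.Injective ι →
        Subalgebra.center ℚ A = ⊥ →
        Module.finrank ℚ A = p ^ 2 →
        ∀ O : Subring A, IsOrder A O →
        ∀ D : ℕ, IsDisc ι O D →
        ∀ z : Matrix.GeneralLinearGroup (Fin p) ℝ,
        ∀ L : ℝ, 1 ≤ L → L ≤ c * (D : ℝ) ^ ((1 : ℝ) / (4 * p * (p - 1)) - ε) →
        Submodule.span ℚ
            (⋃ m ∈ {m : ℕ | 1 ≤ m ∧ (m : ℝ) ≤ L ^ (2 * p - 2)}, OSet ι O z m δ) ≠ ⊤ := by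
  obtain ⟨c, hc, h⟩ := stmt9_general p (by lia) δ
  exact ⟨c, hc, fun A _ _ ι _ hcenter hA O hO D hD z L hL ↦
    h A ι hcenter hA O hO D hD z L ε (by linarith) hε.le⟩
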